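/- Let S = F₂[w, x, y, z] / ⟨w³ − 1, x³ − 1, y³ − 1, z⁴ − 1⟩, a 108-dimensional commutative F₂-algebra, and let F = (1 + x)(1 + yz), G = (1 + y)(1 + zw), H = (1 + z)(1 + wx), I = (1 + w)(1 + xy) in S. Let d₂ : S⁶ → S⁴ and d₃ : S⁴ → S⁶ be the S-linear maps given by multiplication by the block matrices D₂ = [[G,H,I,0,0,0],[F,0,0,H,I,0],[0,F,0,G,0,I],[0,0,F,0,G,H]] and D₃ = [[H,I,0,0],[G,0,I,0],[0,G,H,0],[F,0,0,I],[0,F,0,H],[0,0,F,G]], viewed as F₂-linear maps between F₂-vector spaces of dimensions 648 and 432. Then d₂ ∘ d₃ = 0 and dim_{F₂} ker(d₂) − dim_{F₂} im(d₃) = 60; i.e., this multivariate multicycle code encodes k = 60 logical qubits in n = 648 physical qubits. -/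

import Mathlib

open MvPolynomial Matrix

set_option synthInstance.maxHeartbeats 1000000
set_option maxHeartbeats 2000000

noncomputable section

/-- The ideal `⟨w³−1, x³−1, y³−1, z⁴−1⟩` in `𝔽₂[w,x,y,z]`. -/
def relIdeal : Ideal (MvPolynomial (Fin 4) (ZMod 2)) :=
  Ideal.span {X 0 ^ 3 - 1, X 1 ^ 3 - 1, X 2 ^ 3 - 1, X 3 ^ 4 - 1}

/-- The 108-dimensional commutative `𝔽₂`-algebra
`S = 𝔽₂[w,x,y,z]/⟨w³−1, x³−1, y³−1, z⁴−1⟩`. -/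
abbrev Squot : Type := MvPolynomial (Fin 4) (ZMod 2) ⧸ relIdeal

def wq : Squot := Ideal.Quotient.mk relIdeal (X 0)
def xq : Squot := Ideal.Quotient.mk relIdeal (X 1)
def yq : Squot := Ideal.Quotient.mk relIdeal (X 2)
def zq : Squot := Ideal.Quotient.mk relIdeal (X 3)

/-- `F = (1 + x)(1 + yz)`. -/ def Fq : Squot := (1 + xq) * (1 + yq * zq)
/-- `G = (1 + y)(1 + zw)`. -/ def Gq : Squot := (1 + yq) * (1 + zq * wq)
/-- `H = (1 + z)(1 + wx)`. -/ def Hq : Squot := (1 + zq) * (1 + wq * xq)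
/-- `I = (1 + w)(1 + xy)`. -/ def Iq : Squot := (1 + wq) * (1 + xq * yq)

/-- Second Koszul boundary map `D₂`. -/
def D2 : Matrix (Fin 4) (Fin 6) Squot :=
  !![Gq, Hq, Iq, 0, 0, 0;
     Fq, 0, 0, Hq, Iq, 0;
     0, Fq, 0, Gq, 0, Iq;
     0, 0, Fq, 0, Gq, Hq]

/-- Third Koszul boundary map `D₃`. -/
def D3 : Matrix (Fin 6) (Fin 4) Squot :=
  !![Hq, Iq, 0, 0;
     Gq, 0, Iq, 0;
     0, Gq, Hq, 0;
     Fq, 0, 0, Iq;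
     0, Fq, 0, Hq;
     0, 0, Fq, Gq]

set_option linter.all false

section generic
variable {K S : Type} [Field K] [CommRing S] [Algebra K S] [FiniteDimensional K S]

lemma aux_exact {l m n : Type} [Fintype l] [Fintype m] [Fintype n] [DecidableEq m] (e : S)
    (K3 : Matrix m l S) (K2 : Matrix n m S) (h3 : Matrix l m S) (h2 : Matrix m n S)
    (h0 : K2 * K3 = 0) (h1 : K3 * h3 + h2 * K2 = 1) :
    Module.finrank K (LinearMap.range ((e • K3).mulVecLin.restrictScalars K)) +
    Module.finrank K (LinearMap.range ((e • K2).mulVecLin.restrictScalars K)) =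
    Module.finrank K (LinearMap.range ((e • (1 : Matrix m m S)).mulVecLin.restrictScalars K)) := by
  set V := LinearMap.range ((e • (1 : Matrix m m S)).mulVecLin.restrictScalars K) with hV
  set k2 := K2.mulVecLin.restrictScalars K with hk2
  have hr := LinearMap.finrank_range_add_finrank_ker (k2.domRestrict V)
  have e1 : LinearMap.range (k2.domRestrict V) =
      LinearMap.range ((e • K2).mulVecLin.restrictScalars K) := by
    ext v
    simp only [LinearMap.mem_range]
    constructor
    · rintro ⟨⟨_, u, rfl⟩, rfl⟩
      refine ⟨u, ?_⟩
      simp [hk2, Matrix.mulVec_smul, Matrix.smul_mulVec]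
    · rintro ⟨u, rfl⟩
      refine ⟨⟨_, u, rfl⟩, ?_⟩
      simp [hk2, Matrix.mulVec_smul, Matrix.smul_mulVec]
  have e2 : (LinearMap.ker (k2.domRestrict V)).map V.subtype =
      LinearMap.range ((e • K3).mulVecLin.restrictScalars K) := by
    ext v
    simp only [LinearMap.mem_range, Submodule.mem_map, LinearMap.mem_ker]
    constructor
    · rintro ⟨⟨_, u, rfl⟩, h, rfl⟩
      refine ⟨h3 *ᵥ u, ?_⟩
      simp [hk2, Matrix.mulVec_smul, Matrix.smul_mulVec] at h ⊢
      have := congrArg (fun A => e • (A *ᵥ u)) h1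
      simp only [Matrix.add_mulVec, smul_add, ← Matrix.mulVec_mulVec, Matrix.one_mulVec] at this
      rw [← this, ← Matrix.mulVec_smul h2, h]
      simp
    · rintro ⟨u, rfl⟩
      refine ⟨⟨_, K3 *ᵥ u, rfl⟩, ?_, ?_⟩
      · simp [hk2, Matrix.mulVec_smul, Matrix.smul_mulVec, h0]
      · simp [Matrix.smul_mulVec]
  rw [e1] at hr
  rw [← e2, ← hr, Submodule.finrank_map_subtype_eq, add_comm]

lemma aux_pi (m : Type) [Fintype m] [DecidableEq m] (e : S) :
    Module.finrank K (LinearMap.range ((e • (1 : Matrix m m S)).mulVecLin.restrictScalars K))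
     = Fintype.card m * Module.finrank K (LinearMap.range (LinearMap.mulLeft K e)) := by
  set R := LinearMap.range (LinearMap.mulLeft K e)
  let ι : (m → R) →ₗ[K] (m → S) := LinearMap.pi fun i => R.subtype ∘ₗ LinearMap.proj i
  have hi : Function.Injective ι := by
    intro u v h
    funext i
    exact Subtype.ext (congrFun h i)
  have hr : LinearMap.range ι =
      LinearMap.range ((e • (1 : Matrix m m S)).mulVecLin.restrictScalars K) := by
    ext v
    simp only [LinearMap.mem_range]
    constructor
    · rintro ⟨u, rfl⟩
      choose t ht using fun i => (u i).2
      refine ⟨t, ?_⟩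
      funext i
      simpa [Matrix.smul_mulVec, ι] using ht i
    · rintro ⟨u, rfl⟩
      refine ⟨fun i => ⟨_, u i, rfl⟩, ?_⟩
      funext i
      simp [Matrix.smul_mulVec, ι]
  rw [← hr, LinearMap.finrank_range_of_inj hi]
  simp [Module.finrank_pi_fintype]

def kz1 (f g h i : S) : Matrix (Fin 1) (Fin 4) S := !![f, g, h, i]
def kz2 (f g h i : S) : Matrix (Fin 4) (Fin 6) S :=
  !![g, h, i, 0, 0, 0;
     f, 0, 0, h, i, 0;
     0, f, 0, g, 0, i;
     0, 0, f, 0, g, h]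
def kz3 (f g h i : S) : Matrix (Fin 6) (Fin 4) S :=
  !![h, i, 0, 0;
     g, 0, i, 0;
     0, g, h, 0;
     f, 0, 0, i;
     0, f, 0, h;
     0, 0, f, g]

end generic

section id
variable {S : Type} [CommRing S]

lemma kz12 (h2 : (2 : S) = 0) (f g h i : S) : kz1 f g h i * kz2 f g h i = 0 := by
  ext p q
  fin_cases p; fin_cases q <;> simp [kz1, kz2, Matrix.mul_apply, Fin.sum_univ_succ] <;> grind
lemma kz23 (h2 : (2 : S) = 0) (f g h i : S) : kz2 f g h i * kz3 f g h i = 0 := by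
  ext p q
  fin_cases p <;> fin_cases q <;> simp [kz3, kz2, Matrix.mul_apply, Fin.sum_univ_succ] <;> grind
lemma hom1 (f g h i a b c d : S) (hu : a * f + b * g + c * h + d * i = 1) :
    kz1 f g h i * (kz1 a b c d)ᵀ = 1 := by
  ext p q
  fin_cases p; fin_cases q; simp [kz1, Matrix.mul_apply, Fin.sum_univ_succ]; grind
lemma hom2 (h2 : (2 : S) = 0) (f g h i a b c d : S) (hu : a * f + b * g + c * h + d * i = 1) :
    kz2 f g h i * (kz2 a b c d)ᵀ + (kz1 a b c d)ᵀ * kz1 f g h i = 1 := by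
  ext p q
  fin_cases p <;> fin_cases q <;>
    rw [Matrix.add_apply, Matrix.mul_apply, Matrix.mul_apply] <;>
    simp [kz1, kz2, Fin.sum_univ_succ] <;> grind
lemma hom3 (h2 : (2 : S) = 0) (f g h i a b c d : S) (hu : a * f + b * g + c * h + d * i = 1) :
    kz3 f g h i * (kz3 a b c d)ᵀ + (kz2 a b c d)ᵀ * kz2 f g h i = 1 := by
  ext p q
  fin_cases p <;> fin_cases q <;>
    rw [Matrix.add_apply, Matrix.mul_apply, Matrix.mul_apply] <;>
    simp [kz3, kz2, Fin.sum_univ_succ] <;> grind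
end id

lemma kz_ranks {K S : Type} [Field K] [CommRing S] [Algebra K S] [FiniteDimensional K S]
    (h2 : (2 : S) = 0) (e f g h i a b c d : S) (hu : a * f + b * g + c * h + d * i = 1) (r : ℕ)
    (hr : Module.finrank K (LinearMap.range (LinearMap.mulLeft K e)) = r) :
    Module.finrank K (LinearMap.range ((e • kz2 f g h i).mulVecLin.restrictScalars K)) = 3 * r ∧
    Module.finrank K (LinearMap.range ((e • kz3 f g h i).mulVecLin.restrictScalars K)) = 3 * r := by
  have A := aux_exact (K := K) e (kz2 f g h i) (kz1 f g h i) _ _ (kz12 h2 f g h i)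
    (hom2 h2 f g h i a b c d hu)
  have B := aux_exact (K := K) e (kz3 f g h i) (kz2 f g h i) _ _ (kz23 h2 f g h i)
    (hom3 h2 f g h i a b c d hu)
  have C := aux_exact (K := K) e (kz1 f g h i) (0 : Matrix (Fin 1) (Fin 1) S) (kz1 a b c d)ᵀ 0
    (by simp) (by simp [hom1 f g h i a b c d hu])
  have hz : LinearMap.range ((e • (0 : Matrix (Fin 1) (Fin 1) S)).mulVecLin.restrictScalars K)
      = ⊥ := by
    rw [LinearMap.range_eq_bot]; ext; simp
  rw [aux_pi, hr] at A B C
  rw [hz, finrank_bot] at C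
  simp at A B C
  omega

section ringid
variable {S : Type} [CommRing S]

/-- The relations among the generators and the idempotents `p, q, r`. -/
lemma ring_facts (h2 : (2 : S) = 0) (w x y z : S) (hw : w ^ 3 = 1) (hx : x ^ 3 = 1)
    (hy : y ^ 3 = 1) (hz : z ^ 4 = 1) :
    ∃ E0 E1 Ew Ex Ey e f g h i a b c d : S,
      E1 = (1 + w + w ^ 2) * (1 + x + x ^ 2) * (1 + y + y ^ 2) ∧
      Ew = (w + w ^ 2) * (1 + x + x ^ 2) * (1 + y + y ^ 2) ∧
      Ex = (1 + w + w ^ 2) * (x + x ^ 2) * (1 + y + y ^ 2) ∧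
      Ey = (1 + w + w ^ 2) * (1 + x + x ^ 2) * (y + y ^ 2) ∧
      e = 1 + E1 + z * (Ew + Ex + Ey) ∧
      1 = E0 + E1 + Ew + Ex + Ey ∧ e * E0 = E0 ∧
      (w * E1 = E1 ∧ x * E1 = E1 ∧ y * E1 = E1) ∧
      (w * (w * Ew) = Ew + w * Ew ∧ x * Ew = Ew ∧ y * Ew = Ew ∧ e * Ew = (1 + z) * Ew) ∧
      (w * Ex = Ex ∧ x * (x * Ex) = Ex + x * Ex ∧ y * Ex = Ex ∧ e * Ex = (1 + z) * Ex) ∧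
      (w * Ey = Ey ∧ x * Ey = Ey ∧ y * (y * Ey) = Ey + y * Ey ∧ e * Ey = (1 + z) * Ey) ∧
      e * f = (1 + x) * (1 + y * z) ∧ e * g = (1 + y) * (1 + z * w) ∧
      e * h = (1 + z) * (1 + w * x) ∧ e * i = (1 + w) * (1 + x * y) ∧
      a * f + b * g + c * h + d * i = 1 := by
  obtain ⟨p, hp⟩ : ∃ p, p = 1 + w + w ^ 2 := ⟨_, rfl⟩
  obtain ⟨q, hq⟩ : ∃ p, p = 1 + x + x ^ 2 := ⟨_, rfl⟩
  obtain ⟨r, hr⟩ : ∃ p, p = 1 + y + y ^ 2 := ⟨_, rfl⟩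
  have wp : w * p = p := by rw [hp]; linear_combination hw
  have xq : x * q = q := by rw [hq]; linear_combination hx
  have yr : y * r = r := by rw [hr]; linear_combination hy
  have pp : p * p = p := by
    linear_combination (p : S) * hp + (1 + w) * wp + wp + h2 * p
  have qq : q * q = q := by
    linear_combination (q : S) * hq + (1 + x) * xq + xq + h2 * q
  have rr : r * r = r := by
    linear_combination (r : S) * hr + (1 + y) * yr + yr + h2 * r
  have ww : w * w = 1 + w + p := by rw [hp]; linear_combination -(1 + w) * h2
  have xx : x * x = 1 + x + q := by rw [hq]; linear_combination -(1 + x) * h2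
  have yy : y * y = 1 + y + r := by rw [hr]; linear_combination -(1 + y) * h2
  have ew : w + w ^ 2 = 1 + p := by rw [hp]; linear_combination - h2
  have ex : x + x ^ 2 = 1 + q := by rw [hq]; linear_combination - h2
  have ey : y + y ^ 2 = 1 + r := by rw [hr]; linear_combination - h2
  rw [← hp, ← hq, ← hr, ew, ex, ey]
  clear hp hq hr ew ex ey hw hx hy
  obtain ⟨E1, hE1⟩ : ∃ E, E = p * q * r := ⟨_, rfl⟩
  obtain ⟨Ew, hEw⟩ : ∃ E, E = (1 + p) * q * r := ⟨_, rfl⟩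
  obtain ⟨Ex, hEx⟩ : ∃ E, E = p * (1 + q) * r := ⟨_, rfl⟩
  obtain ⟨Ey, hEy⟩ : ∃ E, E = p * q * (1 + r) := ⟨_, rfl⟩
  obtain ⟨E0, hE0⟩ : ∃ E, E = 1 + E1 + Ew + Ex + Ey := ⟨_, rfl⟩
  obtain ⟨e, he⟩ : ∃ e, e = 1 + E1 + z * (Ew + Ex + Ey) := ⟨_, rfl⟩
  have s1 : w * E1 = E1 ∧ x * E1 = E1 ∧ y * E1 = E1 := by
    refine ⟨?_, ?_, ?_⟩ <;> grind
  have sw : w * (w * Ew) = Ew + w * Ew ∧ x * Ew = Ew ∧ y * Ew = Ew := by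
    refine ⟨?_, ?_, ?_⟩ <;> grind
  have sx : w * Ex = Ex ∧ x * (x * Ex) = Ex + x * Ex ∧ y * Ex = Ex := by
    refine ⟨?_, ?_, ?_⟩ <;> grind
  have sy : w * Ey = Ey ∧ x * Ey = Ey ∧ y * (y * Ey) = Ey + y * Ey := by
    refine ⟨?_, ?_, ?_⟩ <;> grind
  have i1 : E1 * E1 = E1 := by grind
  have iw : Ew * Ew = Ew := by grind
  have ix : Ex * Ex = Ex := by grind
  have iy : Ey * Ey = Ey := by grind
  have o1 : E1 * Ew = 0 := by grind
  have o2 : E1 * Ex = 0 := by grind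
  have o3 : E1 * Ey = 0 := by grind
  have o4 : Ew * Ex = 0 := by grind
  have o5 : Ew * Ey = 0 := by grind
  have o6 : Ex * Ey = 0 := by grind
  have hF : (1 + y * z) * (1 + y * z) ^ 3 = 1 + y := by grind
  have xi : x * (1 + x) = 1 + q := by grind
  have yi : y * (1 + y) = 1 + r := by grind
  have wi : w * (1 + w) = 1 + p := by grind
  have hE0' : E0 = (1 + q) * (1 + r) + q * (1 + r) * (1 + p) + (1 + q) * r * (1 + p) := by grind
  have uF : x * y * (1 + y * z) ^ 3 * ((1 + x) * (1 + y * z)) = (1 + q) * (1 + r) := by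
    linear_combination (x * (1 + x) * y) * hF + xi * (y * (1 + y)) + (1 + q) * yi
  have uI1 : w * y * (q * (1 + r) * (1 + p)) * ((1 + w) * (1 + x * y)) =
      q * (1 + r) * (1 + p) := by
    have : q * (1 + x * y) = q * (1 + y) := by linear_combination y * xq
    have h3 : (1 + r) * (1 + r) = 1 + r := by grind
    have h4 : (1 + p) * (1 + p) = 1 + p := by grind
    calc _ = (w * (1 + w)) * y * (1 + r) * (1 + p) * (q * (1 + x * y)) := by ring
      _ = (1 + p) * (1 + p) * ((1 + r) * (y * (1 + y))) * q := by rw [this, wi]; ring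
      _ = _ := by rw [yi, h3, h4]; ring
  have uI2 : w * x * ((1 + q) * r * (1 + p)) * ((1 + w) * (1 + x * y)) =
      (1 + q) * r * (1 + p) := by
    have : r * (1 + x * y) = r * (1 + x) := by linear_combination x * yr
    have h3 : (1 + q) * (1 + q) = 1 + q := by grind
    have h4 : (1 + p) * (1 + p) = 1 + p := by grind
    calc _ = (w * (1 + w)) * x * (1 + q) * (1 + p) * (r * (1 + x * y)) := by ring
      _ = (1 + p) * (1 + p) * ((1 + q) * (x * (1 + x))) * r := by rw [this, wi]; ring
      _ = _ := by rw [xi, h3, h4]; ring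
  obtain ⟨d0, hd0⟩ : ∃ d, d = w * y * (q * (1 + r) * (1 + p)) + w * x * ((1 + q) * r * (1 + p)) :=
    ⟨_, rfl⟩
  obtain ⟨a0, ha0⟩ : ∃ d, d = x * y * (1 + y * z) ^ 3 := ⟨_, rfl⟩
  have u0 : a0 * ((1 + x) * (1 + y * z)) + d0 * ((1 + w) * (1 + x * y)) = E0 := by
    rw [hE0', hd0, ha0]; linear_combination uF + uI1 + uI2
  have vw : w * (1 + w) * Ew = Ew := by linear_combination sw.1 + h2 * (w * Ew)
  have vx : x * (1 + x) * Ex = Ex := by linear_combination sx.2.1 + h2 * (x * Ex)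
  have vy : y * (1 + y) * Ey = Ey := by linear_combination sy.2.2 + h2 * (y * Ey)
  clear hE0' uF uI1 uI2 hd0 ha0 xi yi wi hF pp qq rr ww xx yy wp xq yr
  obtain ⟨s11, s12, s13⟩ := s1
  obtain ⟨sw1, sw2, sw3⟩ := sw
  obtain ⟨sx1, sx2, sx3⟩ := sx
  obtain ⟨sy1, sy2, sy3⟩ := sy
  have z1 : E0 * E1 = 0 := by linear_combination hE0 * E1 + i1 + o1 + o2 + o3 + h2 * E1
  have z2 : E0 * Ew = 0 := by linear_combination hE0 * Ew + iw + o1 + o4 + o5 + h2 * Ew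
  have z3 : E0 * Ex = 0 := by linear_combination hE0 * Ex + ix + o2 + o4 + o6 + h2 * Ex
  have z4 : E0 * Ey = 0 := by linear_combination hE0 * Ey + iy + o3 + o5 + o6 + h2 * Ey
  have z0 : E0 * E0 = E0 := by linear_combination hE0 * E0 + z1 + z2 + z3 + z4
  have one : 1 = E0 + E1 + Ew + Ex + Ey := by
    linear_combination - hE0 - h2 * (E1 + Ew + Ex + Ey)
  have e0 : e * E0 = E0 := by linear_combination he * E0 + z1 + z * (z2 + z3 + z4)
  have e1 : e * E1 = 0 := by linear_combination he * E1 + i1 + z * (o1 + o2 + o3) + h2 * E1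
  have eew : e * Ew = (1 + z) * Ew := by
    linear_combination he * Ew + o1 + z * (iw + o4 + o5)
  have eex : e * Ex = (1 + z) * Ex := by
    linear_combination he * Ex + o2 + z * (ix + o4 + o6)
  have eey : e * Ey = (1 + z) * Ey := by
    linear_combination he * Ey + o3 + z * (iy + o5 + o6)
  have F1 : (1 + x) * (1 + y * z) * E1 = 0 := by
    linear_combination (1 + y * z) * s12 + (1 + y * z) * E1 * h2
  have Fw : (1 + x) * (1 + y * z) * Ew = 0 := by
    linear_combination (1 + y * z) * sw2 + (1 + y * z) * Ew * h2
  have Fy : (1 + x) * (1 + y * z) * Ey = 0 := by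
    linear_combination (1 + y * z) * sy2 + (1 + y * z) * Ey * h2
  have Fx : (1 + x) * (1 + y * z) * Ex = (1 + x) * (1 + z) * Ex := by
    linear_combination (1 + x) * z * sx3
  have G1 : (1 + y) * (1 + z * w) * E1 = 0 := by
    linear_combination (1 + z * w) * s13 + (1 + z * w) * E1 * h2
  have Gw : (1 + y) * (1 + z * w) * Ew = 0 := by
    linear_combination (1 + z * w) * sw3 + (1 + z * w) * Ew * h2
  have Gx : (1 + y) * (1 + z * w) * Ex = 0 := by
    linear_combination (1 + z * w) * sx3 + (1 + z * w) * Ex * h2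
  have Gy : (1 + y) * (1 + z * w) * Ey = (1 + y) * (1 + z) * Ey := by
    linear_combination (1 + y) * z * sy1
  have H1 : (1 + z) * (1 + w * x) * E1 = 0 := by
    linear_combination (1 + z) * (w * s12 + s11 + h2 * E1)
  have Hw : (1 + z) * (1 + w * x) * Ew = (1 + z) * (1 + w) * Ew := by
    linear_combination (1 + z) * (w * sw2)
  have Hx : (1 + z) * (1 + w * x) * Ex = (1 + z) * (1 + x) * Ex := by
    linear_combination (1 + z) * (x * sx1)
  have Hy : (1 + z) * (1 + w * x) * Ey = 0 := by
    linear_combination (1 + z) * (w * sy2 + sy1 + h2 * Ey)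
  have I1 : (1 + w) * (1 + x * y) * E1 = 0 := by
    linear_combination (1 + x * y) * (s11 + h2 * E1)
  have Iw : (1 + w) * (1 + x * y) * Ew = 0 := by
    linear_combination (1 + w) * (x * sw3 + sw2 + h2 * Ew)
  have Ix : (1 + w) * (1 + x * y) * Ex = 0 := by
    linear_combination (1 + x * y) * (sx1 + h2 * Ex)
  have Iy : (1 + w) * (1 + x * y) * Ey = 0 := by
    linear_combination (1 + x * y) * (sy1 + h2 * Ey)
  refine ⟨E0, E1, Ew, Ex, Ey, e,
    E0 * ((1 + x) * (1 + y * z)) + E1 + (1 + x) * Ex,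
    E0 * ((1 + y) * (1 + z * w)) + (1 + y) * Ey,
    E0 * ((1 + z) * (1 + w * x)) + (1 + w) * Ew + (1 + x) * Ex,
    E0 * ((1 + w) * (1 + x * y)), E0 * a0 + E1 + x * Ex, y * Ey, w * Ew, E0 * d0,
    hE1, hEw, hEx, hEy, he, one, e0, ⟨s11, s12, s13⟩, ⟨sw1, sw2, sw3, eew⟩, ⟨sx1, sx2, sx3, eex⟩,
    ⟨sy1, sy2, sy3, eey⟩, ?_, ?_, ?_, ?_, ?_⟩
  · linear_combination (e0 - one) * ((1 + x) * (1 + y * z)) + e1 + (1 + x) * eex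
      - F1 - Fw - Fy - Fx
  · linear_combination (e0 - one) * ((1 + y) * (1 + z * w)) + (1 + y) * eey
      - G1 - Gw - Gy - Gx
  · linear_combination (e0 - one) * ((1 + z) * (1 + w * x)) + (1 + w) * eew + (1 + x) * eex
      - H1 - Hw - Hy - Hx
  · linear_combination (e0 - one) * ((1 + w) * (1 + x * y)) - I1 - Iw - Iy - Ix
  · generalize (1 + x) * (1 + y * z) = F at *
    generalize (1 + y) * (1 + z * w) = G at *
    generalize (1 + z) * (1 + w * x) = H at *
    generalize (1 + w) * (1 + x * y) = I at *
    linear_combination z0 * (a0 * F + d0 * I) + E0 * u0 + z0 + i1 + x * (1 + x) * ix + vx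
      + y * (1 + y) * iy + vy + w * (1 + w) * iw + vw - one
      + z1 * (a0 + F) + z3 * (a0 * (1 + x) + x * F) + o2 * (1 + x + x) + z4 * (y * G)
      + z2 * w * H + o4 * w * (1 + x)
end ringid

abbrev GG : Type := ZMod 3 × ZMod 3 × ZMod 3 × ZMod 4

lemma gg_dec (a b c : ZMod 3) (d : ZMod 4) :
    a.val • ((1, 0, 0, 0) : GG) + b.val • ((0, 1, 0, 0) : GG) + c.val • ((0, 0, 1, 0) : GG)
      + d.val • ((0, 0, 0, 1) : GG) = ((a, b, c, d) : GG) := by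
  refine Prod.ext ?_ (Prod.ext ?_ (Prod.ext ?_ ?_)) <;> simp

lemma finrank_gg : Module.finrank (ZMod 2) (AddMonoidAlgebra (ZMod 2) GG) = 108 := by
  rw [Module.finrank_eq_card_basis (AddMonoidAlgebra.basis GG (ZMod 2))]
  simp [GG]

/-- `S` is generated by `w, x, y, z` -/
def GenBy {S : Type} [CommRing S] (w x y z : S) : Prop :=
  ∀ M : AddSubgroup S, (1 : S) ∈ M → (∀ s ∈ M, w * s ∈ M) → (∀ s ∈ M, x * s ∈ M) →
    (∀ s ∈ M, y * s ∈ M) → (∀ s ∈ M, z * s ∈ M) → ∀ s, s ∈ M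

/-- `S` maps to every other solution of the relations -/
def EvTo {S : Type} [CommRing S] (w x y z : S) : Prop :=
  ∀ (B : Type) [CommRing B] [Algebra (ZMod 2) B] (a b c d : B), a ^ 3 = 1 → b ^ 3 = 1 →
    c ^ 3 = 1 → d ^ 4 = 1 → ∃ φ : S →+* B, φ w = a ∧ φ x = b ∧ φ y = c ∧ φ z = d

section gen2
variable {S : Type} [CommRing S] [Algebra (ZMod 2) S]

lemma top_of_closed {ι : Type} (T : ι → S) (w x y z : S) (hg : GenBy w x y z)
    (M : Submodule (ZMod 2) S) (e : S)
    (hM : M = LinearMap.range (LinearMap.mulLeft (ZMod 2) e) ⊔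
      Submodule.span (ZMod 2) (Set.range T)) (h1 : (1 : S) ∈ M)
    (hw : ∀ i, w * T i ∈ M) (hx : ∀ i, x * T i ∈ M)
    (hy : ∀ i, y * T i ∈ M) (hz : ∀ i, z * T i ∈ M) : M = ⊤ := by
  have key : ∀ u : S, (∀ i, u * T i ∈ M) → ∀ s ∈ M, u * s ∈ M := by
    intro u hu s hs
    rw [hM] at hs
    obtain ⟨_, ⟨c, rfl⟩, t, ht, rfl⟩ := Submodule.mem_sup.1 hs
    rw [mul_add]
    refine M.add_mem ?_ ?_
    · rw [hM]
      refine Submodule.mem_sup_left ⟨u * c, ?_⟩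
      simp only [LinearMap.mulLeft_apply]; ring
    · clear hs
      induction ht using Submodule.span_induction with
      | mem x hx => obtain ⟨i, rfl⟩ := hx; exact hu i
      | zero => simp
      | add x y _ _ hx hy => rw [mul_add]; exact M.add_mem hx hy
      | smul a x _ hx => rw [mul_smul_comm]; exact M.smul_mem _ hx
  rw [eq_top_iff]
  rintro s -
  exact hg M.toAddSubgroup h1 (key w hw) (key x hx) (key y hy) (key z hz) s

def monq (w x y z : S) (g : Fin 3 × Fin 3 × Fin 3 × Fin 4) : S :=
  w ^ (g.1 : ℕ) * x ^ (g.2.1 : ℕ) * y ^ (g.2.2.1 : ℕ) * z ^ (g.2.2.2 : ℕ)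

lemma span_monq (w x y z : S) (hw : w ^ 3 = 1) (hx : x ^ 3 = 1)
    (hy : y ^ 3 = 1) (hz : z ^ 4 = 1) (hg : GenBy w x y z) :
    Submodule.span (ZMod 2) (Set.range (monq w x y z)) = ⊤ := by
  have key : ∀ g, monq w x y z g ∈ Submodule.span (ZMod 2) (Set.range (monq w x y z)) :=
    fun g => Submodule.subset_span ⟨g, rfl⟩
  refine top_of_closed (monq w x y z) w x y z hg _ 0 ?_ ?_ ?_ ?_ ?_ ?_
  · have : LinearMap.range (LinearMap.mulLeft (ZMod 2) (0 : S)) = ⊥ := by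
      rw [LinearMap.range_eq_bot]; ext; simp
    rw [this, bot_sup_eq]
  · simpa [monq] using key (0, 0, 0, 0)
  · rintro ⟨a, b, c, d⟩
    have : w * monq w x y z (a, b, c, d) = monq w x y z (a + 1, b, c, d) := by
      fin_cases a
      · simp [monq]; ring
      · simp [monq]; ring
      · simp [monq]; linear_combination (x ^ (b : ℕ) * y ^ (c : ℕ) * z ^ (d : ℕ)) * hw
    rw [this]; exact key _
  · rintro ⟨a, b, c, d⟩
    have : x * monq w x y z (a, b, c, d) = monq w x y z (a, b + 1, c, d) := by
      fin_cases b
      · simp [monq]; ring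
      · simp [monq]; ring
      · simp [monq]; linear_combination (w ^ (a : ℕ) * y ^ (c : ℕ) * z ^ (d : ℕ)) * hx
    rw [this]; exact key _
  · rintro ⟨a, b, c, d⟩
    have : y * monq w x y z (a, b, c, d) = monq w x y z (a, b, c + 1, d) := by
      fin_cases c
      · simp [monq]; ring
      · simp [monq]; ring
      · simp [monq]; linear_combination (w ^ (a : ℕ) * x ^ (b : ℕ) * z ^ (d : ℕ)) * hy
    rw [this]; exact key _
  · rintro ⟨a, b, c, d⟩
    have : z * monq w x y z (a, b, c, d) = monq w x y z (a, b, c, d + 1) := by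
      fin_cases d
      · simp [monq]; ring
      · simp [monq]; ring
      · simp [monq]; ring
      · simp [monq]; linear_combination (w ^ (a : ℕ) * x ^ (b : ℕ) * y ^ (c : ℕ)) * hz
    rw [this]; exact key _

lemma finite_S (w x y z : S) (hw : w ^ 3 = 1) (hx : x ^ 3 = 1)
    (hy : y ^ 3 = 1) (hz : z ^ 4 = 1) (hg : GenBy w x y z) : FiniteDimensional (ZMod 2) S := by
  refine ⟨⟨(Set.finite_range (monq w x y z)).toFinset, ?_⟩⟩
  simpa using span_monq w x y z hw hx hy hz hg

lemma finrank_S (w x y z : S) (hw : w ^ 3 = 1) (hx : x ^ 3 = 1)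
    (hy : y ^ 3 = 1) (hz : z ^ 4 = 1) (hg : GenBy w x y z) (hev : EvTo w x y z) :
    Module.finrank (ZMod 2) S = 108 := by
  have := finite_S w x y z hw hx hy hz hg
  apply le_antisymm
  · have := finrank_range_le_card (R := ZMod 2) (monq w x y z)
    rw [Set.finrank, span_monq w x y z hw hx hy hz hg, finrank_top] at this
    simpa using this
  · have hpow : ∀ (g : GG) (n : ℕ), (AddMonoidAlgebra.single g 1 : AddMonoidAlgebra (ZMod 2) GG) ^ n
        = AddMonoidAlgebra.single (n • g) 1 := by
      intro g n; rw [AddMonoidAlgebra.single_pow, one_pow]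
    obtain ⟨φ, h1, h2, h3, h4⟩ := hev (AddMonoidAlgebra (ZMod 2) GG)
      (AddMonoidAlgebra.single (1,0,0,0) 1) (AddMonoidAlgebra.single (0,1,0,0) 1)
      (AddMonoidAlgebra.single (0,0,1,0) 1) (AddMonoidAlgebra.single (0,0,0,1) 1)
      (by rw [hpow]; rfl) (by rw [hpow]; rfl) (by rw [hpow]; rfl) (by rw [hpow]; rfl)
    let Φ : S →ₗ[ZMod 2] AddMonoidAlgebra (ZMod 2) GG := AddMonoidHom.toZModLinearMap 2 φ.toAddMonoidHom
    have hs : Function.Surjective Φ := by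
      rw [← LinearMap.range_eq_top, eq_top_iff,
        ← (AddMonoidAlgebra.basis GG (ZMod 2)).span_eq, Submodule.span_le]
      rintro _ ⟨⟨a, b, c, d⟩, rfl⟩
      refine ⟨w ^ a.val * x ^ b.val * y ^ c.val * z ^ d.val, ?_⟩
      change φ _ = _
      simp only [map_mul, map_pow, h1, h2, h3, h4, hpow,
        AddMonoidAlgebra.single_mul_single, mul_one]
      rw [gg_dec]
      rfl
    rw [← finrank_gg]
    exact LinearMap.finrank_le_finrank_of_surjective hs

abbrev F4 : Type := QuadraticAlgebra (ZMod 2) 1 1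
abbrev Z2 : Type := QuadraticAlgebra (ZMod 2) 1 0
abbrev Z4 : Type := QuadraticAlgebra Z2 ⟨0, 1⟩ 0

lemma finrank_tgt : Module.finrank (ZMod 2) (Z4 × F4 × F4 × F4) = 10 := by
  have h : Module.finrank (ZMod 2) Z4 = 4 := by
    rw [← Module.finrank_mul_finrank (ZMod 2) Z2 Z4, QuadraticAlgebra.finrank_eq_two,
      QuadraticAlgebra.finrank_eq_two]
  have : Module.Finite (ZMod 2) Z4 := Module.finite_of_finrank_pos (by omega)
  have : Module.Free (ZMod 2) Z4 := inferInstance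
  rw [Module.finrank_prod, Module.finrank_prod, Module.finrank_prod, h,
    QuadraticAlgebra.finrank_eq_two]

lemma finrank_e (w x y z : S) (hw : w ^ 3 = 1) (hx : x ^ 3 = 1)
    (hy : y ^ 3 = 1) (hz : z ^ 4 = 1) (hg : GenBy w x y z) (hev : EvTo w x y z)
    (h2 : (2 : S) = 0)
    (E0 E1 Ew Ex Ey e : S)
    (hE1 : E1 = (1 + w + w ^ 2) * (1 + x + x ^ 2) * (1 + y + y ^ 2))
    (hEw : Ew = (w + w ^ 2) * (1 + x + x ^ 2) * (1 + y + y ^ 2))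
    (hEx : Ex = (1 + w + w ^ 2) * (x + x ^ 2) * (1 + y + y ^ 2))
    (hEy : Ey = (1 + w + w ^ 2) * (1 + x + x ^ 2) * (y + y ^ 2))
    (he : e = 1 + E1 + z * (Ew + Ex + Ey))
    (one : 1 = E0 + E1 + Ew + Ex + Ey) (e0 : e * E0 = E0)
    (s1 : w * E1 = E1 ∧ x * E1 = E1 ∧ y * E1 = E1)
    (sw : w * (w * Ew) = Ew + w * Ew ∧ x * Ew = Ew ∧ y * Ew = Ew ∧ e * Ew = (1 + z) * Ew)
    (sx : w * Ex = Ex ∧ x * (x * Ex) = Ex + x * Ex ∧ y * Ex = Ex ∧ e * Ex = (1 + z) * Ex)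
    (sy : w * Ey = Ey ∧ x * Ey = Ey ∧ y * (y * Ey) = Ey + y * Ey ∧ e * Ey = (1 + z) * Ey) :
    Module.finrank (ZMod 2) (LinearMap.range (LinearMap.mulLeft (ZMod 2) e)) = 98 := by
  have hfin := finite_S w x y z hw hx hy hz hg
  have h108 := finrank_S w x y z hw hx hy hz hg hev
  apply le_antisymm
  · obtain ⟨φ, h1, h2, h3, h4⟩ := hev (Z4 × F4 × F4 × F4) (1, ⟨0, 1⟩, 1, 1) (1, 1, ⟨0, 1⟩, 1)
      (1, 1, 1, ⟨0, 1⟩) (⟨0, 1⟩, 1, 1, 1) (by decide) (by decide) (by decide) (by decide)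
    let Φ : S →ₗ[ZMod 2] (Z4 × F4 × F4 × F4) := AddMonoidHom.toZModLinearMap 2 φ.toAddMonoidHom
    have f1 : φ E1 = (1, 0, 0, 0) := by
      simp only [hE1, map_mul, map_add, map_pow, map_one, h1, h2, h3]; decide
    have fw : φ Ew = (0, 1, 0, 0) := by
      simp only [hEw, map_mul, map_add, map_pow, map_one, h1, h2, h3]; decide
    have fx : φ Ex = (0, 0, 1, 0) := by
      simp only [hEx, map_mul, map_add, map_pow, map_one, h1, h2, h3]; decide
    have fy : φ Ey = (0, 0, 0, 1) := by
      simp only [hEy, map_mul, map_add, map_pow, map_one, h1, h2, h3]; decide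
    have fe : φ e = 0 := by
      simp only [he, map_mul, map_add, map_one, f1, fw, fx, fy, h4]; decide
    have hs : Function.Surjective Φ := by
      rintro ⟨⟨⟨p0, p1⟩, ⟨p2, p3⟩⟩, ⟨a0, a1⟩, ⟨b0, b1⟩, ⟨c0, c1⟩⟩
      refine ⟨p0 • E1 + p1 • (E1 * z ^ 2) + p2 • (E1 * z) + p3 • (E1 * z ^ 3) +
        (a0 • Ew + a1 • (Ew * w)) + (b0 • Ex + b1 • (Ex * x)) + (c0 • Ey + c1 • (Ey * y)), ?_⟩
      simp only [map_add, map_smul]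
      have hΦ : ∀ s, Φ s = φ s := fun _ => rfl
      simp only [hΦ, map_mul, map_pow, f1, fw, fx, fy, h1, h2, h3, h4]
      refine Prod.ext ?_ (Prod.ext ?_ (Prod.ext ?_ ?_))
      · simp
        clear * -
        revert p0 p1 p2 p3; decide
      · simp
        clear * -
        revert a0 a1; decide
      · simp
        clear * -
        revert b0 b1; decide
      · simp
        clear * -
        revert c0 c1; decide
    have hle : LinearMap.range (LinearMap.mulLeft (ZMod 2) e) ≤ LinearMap.ker Φ := by
      rintro _ ⟨s, rfl⟩
      change φ (e * s) = 0
      rw [map_mul, fe, zero_mul]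
    have hr := LinearMap.finrank_range_add_finrank_ker Φ
    rw [LinearMap.range_eq_top.2 hs, finrank_top, finrank_tgt, h108] at hr
    have := Submodule.finrank_mono hle
    omega
  · let T : Fin 10 → S := ![E1, E1 * z, E1 * z ^ 2, E1 * z ^ 3, Ew, w * Ew, Ex, x * Ex, Ey, y * Ey]
    obtain ⟨M, hM⟩ : ∃ M, M = LinearMap.range (LinearMap.mulLeft (ZMod 2) e) ⊔
      Submodule.span (ZMod 2) (Set.range T) := ⟨_, rfl⟩
    have me : ∀ c, e * c ∈ M := fun c => by
      rw [hM]; exact Submodule.mem_sup_left ⟨c, rfl⟩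
    have mT : ∀ i, T i ∈ M := fun i => by
      rw [hM]; exact Submodule.mem_sup_right (Submodule.subset_span ⟨i, rfl⟩)
    have mT2 : ∀ i j, T i + T j ∈ M := fun i j => M.add_mem (mT i) (mT j)
    have mTe : ∀ i c, T i + e * c ∈ M := fun i c => M.add_mem (mT i) (me c)
    have cast : ∀ {a b : S}, b ∈ M → a = b → a ∈ M := fun h h' => h' ▸ h
    obtain ⟨s11, s12, s13⟩ := s1
    obtain ⟨sw1, sw2, sw3, sw4⟩ := sw
    obtain ⟨sx1, sx2, sx3, sx4⟩ := sx
    obtain ⟨sy1, sy2, sy3, sy4⟩ := sy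
    have htop : M = ⊤ := by
      refine top_of_closed T w x y z hg M e hM ?_ ?_ ?_ ?_ ?_
      · rw [one, ← e0]
        exact M.add_mem (M.add_mem (M.add_mem (M.add_mem (me _) (mT 0)) (mT 4)) (mT 6)) (mT 8)
      · intro i
        fin_cases i
        · exact cast (mT 0) s11
        · exact cast (mT 1) (by change w * (E1 * z) = E1 * z; linear_combination z * s11)
        · exact cast (mT 2) (by change w * (E1 * z ^ 2) = E1 * z ^ 2; linear_combination z ^ 2 * s11)
        · exact cast (mT 3) (by change w * (E1 * z ^ 3) = E1 * z ^ 3; linear_combination z ^ 3 * s11)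
        · exact mT 5
        · exact cast (mT2 4 5) sw1
        · exact cast (mT 6) sx1
        · exact cast (mT 7) (by change w * (x * Ex) = x * Ex; linear_combination x * sx1)
        · exact cast (mT 8) sy1
        · exact cast (mT 9) (by change w * (y * Ey) = y * Ey; linear_combination y * sy1)
      · intro i
        fin_cases i
        · exact cast (mT 0) s12
        · exact cast (mT 1) (by change x * (E1 * z) = E1 * z; linear_combination z * s12)
        · exact cast (mT 2) (by change x * (E1 * z ^ 2) = E1 * z ^ 2; linear_combination z ^ 2 * s12)
        · exact cast (mT 3) (by change x * (E1 * z ^ 3) = E1 * z ^ 3; linear_combination z ^ 3 * s12)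
        · exact cast (mT 4) sw2
        · exact cast (mT 5) (by change x * (w * Ew) = w * Ew; linear_combination w * sw2)
        · exact mT 7
        · exact cast (mT2 6 7) sx2
        · exact cast (mT 8) sy2
        · exact cast (mT 9) (by change x * (y * Ey) = y * Ey; linear_combination y * sy2)
      · intro i
        fin_cases i
        · exact cast (mT 0) s13
        · exact cast (mT 1) (by change y * (E1 * z) = E1 * z; linear_combination z * s13)
        · exact cast (mT 2) (by change y * (E1 * z ^ 2) = E1 * z ^ 2; linear_combination z ^ 2 * s13)
        · exact cast (mT 3) (by change y * (E1 * z ^ 3) = E1 * z ^ 3; linear_combination z ^ 3 * s13)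
        · exact cast (mT 4) sw3
        · exact cast (mT 5) (by change y * (w * Ew) = w * Ew; linear_combination w * sw3)
        · exact cast (mT 6) sx3
        · exact cast (mT 7) (by change y * (x * Ex) = x * Ex; linear_combination x * sx3)
        · exact mT 9
        · exact cast (mT2 8 9) sy3
      · intro i
        fin_cases i
        · exact cast (mT 1) (by change z * E1 = E1 * z; ring)
        · exact cast (mT 2) (by change z * (E1 * z) = E1 * z ^ 2; ring)
        · exact cast (mT 3) (by change z * (E1 * z ^ 2) = E1 * z ^ 3; ring)
        · exact cast (mT 0) (by change z * (E1 * z ^ 3) = E1; linear_combination E1 * hz)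
        · exact cast (mTe 4 Ew) (by
            change z * Ew = Ew + e * Ew; linear_combination - sw4 - h2 * Ew)
        · exact cast (mTe 5 (w * Ew)) (by
            change z * (w * Ew) = w * Ew + e * (w * Ew)
            linear_combination - w * sw4 - h2 * (w * Ew))
        · exact cast (mTe 6 Ex) (by
            change z * Ex = Ex + e * Ex; linear_combination - sx4 - h2 * Ex)
        · exact cast (mTe 7 (x * Ex)) (by
            change z * (x * Ex) = x * Ex + e * (x * Ex)
            linear_combination - x * sx4 - h2 * (x * Ex))
        · exact cast (mTe 8 Ey) (by
            change z * Ey = Ey + e * Ey; linear_combination - sy4 - h2 * Ey)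
        · exact cast (mTe 9 (y * Ey)) (by
            change z * (y * Ey) = y * Ey + e * (y * Ey)
            linear_combination - y * sy4 - h2 * (y * Ey))
    have h10 := finrank_range_le_card (R := ZMod 2) T
    rw [Set.finrank, Fintype.card_fin] at h10
    have hadd := Submodule.finrank_add_le_finrank_add_finrank
      (LinearMap.range (LinearMap.mulLeft (ZMod 2) e)) (Submodule.span (ZMod 2) (Set.range T))
    rw [← hM, htop, finrank_top, h108] at hadd
    omega

theorem main_gen (w x y z : S) (hw : w ^ 3 = 1) (hx : x ^ 3 = 1)
    (hy : y ^ 3 = 1) (hz : z ^ 4 = 1) (hg : GenBy w x y z) (hev : EvTo w x y z)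
    (F G H I : S) (hF : F = (1 + x) * (1 + y * z)) (hG : G = (1 + y) * (1 + z * w))
    (hH : H = (1 + z) * (1 + w * x)) (hI : I = (1 + w) * (1 + x * y)) :
    Module.finrank (ZMod 2) S = 108 ∧
    Module.finrank (ZMod 2) (Fin 6 → S) = 648 ∧
    Module.finrank (ZMod 2) (Fin 4 → S) = 432 ∧
    ((kz2 F G H I).mulVecLin.restrictScalars (ZMod 2)) ∘ₗ
      ((kz3 F G H I).mulVecLin.restrictScalars (ZMod 2)) = 0 ∧
    Module.finrank (ZMod 2)
        (LinearMap.ker ((kz2 F G H I).mulVecLin.restrictScalars (ZMod 2))) -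
      Module.finrank (ZMod 2)
        (LinearMap.range ((kz3 F G H I).mulVecLin.restrictScalars (ZMod 2))) = 60 := by
  have h2 : (2 : S) = 0 :=
    (map_ofNat (algebraMap (ZMod 2) S) 2).symm.trans (map_zero (algebraMap (ZMod 2) S))
  have hfin := finite_S w x y z hw hx hy hz hg
  have h108 := finrank_S w x y z hw hx hy hz hg hev
  have h648 : Module.finrank (ZMod 2) (Fin 6 → S) = 648 := by
    rw [Module.finrank_pi_fintype]; simp [h108]
  have h432 : Module.finrank (ZMod 2) (Fin 4 → S) = 432 := by
    rw [Module.finrank_pi_fintype]; simp [h108]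
  refine ⟨h108, h648, h432, ?_, ?_⟩
  · refine LinearMap.ext fun v => ?_
    change kz2 F G H I *ᵥ (kz3 F G H I *ᵥ v) = 0
    rw [Matrix.mulVec_mulVec, kz23 h2, Matrix.zero_mulVec]
  · obtain ⟨E0, E1, Ew, Ex, Ey, e, f, g, h, i, a, b, c, d, hE1, hEw, hEx, hEy, he, one, e0, s1,
      sw, sx, sy, ef, eg, eh, ei, hu⟩ := ring_facts h2 w x y z hw hx hy hz
    have hr := finrank_e w x y z hw hx hy hz hg hev h2 E0 E1 Ew Ex Ey e hE1 hEw hEx hEy he one e0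
      s1 sw sx sy
    obtain ⟨r2, r3⟩ := kz_ranks (K := ZMod 2) h2 e f g h i a b c d hu 98 hr
    have k2 : e • kz2 f g h i = kz2 F G H I := by
      rw [hF, hG, hH, hI, ← ef, ← eg, ← eh, ← ei]
      ext p q
      fin_cases p <;> fin_cases q <;> simp [kz2]
    have k3 : e • kz3 f g h i = kz3 F G H I := by
      rw [hF, hG, hH, hI, ← ef, ← eg, ← eh, ← ei]
      ext p q
      fin_cases p <;> fin_cases q <;> simp [kz3]
    rw [k2] at r2
    rw [k3] at r3
    have hrn := LinearMap.finrank_range_add_finrank_ker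
      ((kz2 F G H I).mulVecLin.restrictScalars (ZMod 2))
    rw [r2, h648] at hrn
    rw [r3]
    omega
end gen2

lemma rel_q (p : MvPolynomial (Fin 4) (ZMod 2))
    (h : p ∈ ({X 0 ^ 3 - 1, X 1 ^ 3 - 1, X 2 ^ 3 - 1, X 3 ^ 4 - 1} :
      Set (MvPolynomial (Fin 4) (ZMod 2)))) : Ideal.Quotient.mk relIdeal p = 0 :=
  Ideal.Quotient.eq_zero_iff_mem.2 (Ideal.subset_span h)

lemma hwq : wq ^ 3 = 1 := by
  have := rel_q (X 0 ^ 3 - 1) (by simp)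
  rw [map_sub, map_pow, map_one, sub_eq_zero] at this
  exact this
lemma hxq : xq ^ 3 = 1 := by
  have := rel_q (X 1 ^ 3 - 1) (by simp)
  rw [map_sub, map_pow, map_one, sub_eq_zero] at this
  exact this
lemma hyq : yq ^ 3 = 1 := by
  have := rel_q (X 2 ^ 3 - 1) (by simp)
  rw [map_sub, map_pow, map_one, sub_eq_zero] at this
  exact this
lemma hzq : zq ^ 4 = 1 := by
  have := rel_q (X 3 ^ 4 - 1) (by simp)
  rw [map_sub, map_pow, map_one, sub_eq_zero] at this
  exact this

lemma zmod2_cases : ∀ a : ZMod 2, a = 0 ∨ a = 1 := by decide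

lemma gen_q : GenBy wq xq yq zq := by
  intro M h1 hw hx hy hz s
  obtain ⟨p, rfl⟩ := Ideal.Quotient.mk_surjective s
  induction p using MvPolynomial.induction_on with
  | C a =>
    rcases zmod2_cases a with rfl | rfl
    · rw [C_0, map_zero]; exact M.zero_mem
    · rw [C_1, map_one]; exact h1
  | add p q hp hq => rw [map_add]; exact M.add_mem hp hq
  | mul_X p i hp =>
    rw [map_mul, mul_comm]
    fin_cases i
    · exact hw _ hp
    · exact hx _ hp
    · exact hy _ hp
    · exact hz _ hp

lemma ev_q : EvTo wq xq yq zq := by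
  intro B _ _ a b c d ha hb hc hd
  let ev : MvPolynomial (Fin 4) (ZMod 2) →+* B := eval₂Hom (algebraMap (ZMod 2) B) ![a, b, c, d]
  have hk : relIdeal ≤ RingHom.ker ev := by
    rw [relIdeal, Ideal.span_le]
    rintro p (rfl | rfl | rfl | rfl) <;>
      simp [RingHom.mem_ker, ev, ha, hb, hc, hd]
  refine ⟨Ideal.Quotient.lift relIdeal ev (fun p hp => hk hp), ?_, ?_, ?_, ?_⟩
  · exact (Ideal.Quotient.lift_mk _ _ _).trans (by simp [ev])
  · exact (Ideal.Quotient.lift_mk _ _ _).trans (by simp [ev])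
  · exact (Ideal.Quotient.lift_mk _ _ _).trans (by simp [ev])
  · exact (Ideal.Quotient.lift_mk _ _ _).trans (by simp [ev])

/-- With `S = 𝔽₂[w,x,y,z]/⟨w³−1, x³−1, y³−1, z⁴−1⟩` (108-dimensional over
`𝔽₂`) and `F = (1+x)(1+yz)`, `G = (1+y)(1+zw)`, `H = (1+z)(1+wx)`,
`I = (1+w)(1+xy)`, the `𝔽₂`-linear maps `d₂ : S⁶ → S⁴` and `d₃ : S⁴ → S⁶`
given by the Koszul block matrices `D₂`, `D₃` (between spaces of dimensions
648 and 432) satisfy `d₂ ∘ d₃ = 0` and `dim ker d₂ − dim im d₃ = 60`: this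
multivariate multicycle code encodes `k = 60` logical qubits in `n = 648`
physical qubits. -/
theorem mm_code_648_60 :
    Module.finrank (ZMod 2) Squot = 108 ∧
    Module.finrank (ZMod 2) (Fin 6 → Squot) = 648 ∧
    Module.finrank (ZMod 2) (Fin 4 → Squot) = 432 ∧
    (D2.mulVecLin.restrictScalars (ZMod 2)) ∘ₗ
      (D3.mulVecLin.restrictScalars (ZMod 2)) = 0 ∧
    Module.finrank (ZMod 2)
        (LinearMap.ker (D2.mulVecLin.restrictScalars (ZMod 2))) -
      Module.finrank (ZMod 2)
        (LinearMap.range (D3.mulVecLin.restrictScalars (ZMod 2))) = 60 := by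
  exact main_gen wq xq yq zq hwq hxq hyq hzq gen_q ev_q Fq Gq Hq Iq rfl rfl rfl rfl

end
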